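/- For every t ≥ 0, the 0-th density function of the periodic sequence S satisfies ψ₀(t) = Σ_{i=1}^m max(d_i − 2t, 0). Equivalently, ψ₀ is piecewise linear with corner points (0, 1) and, for i = 1, …, m, (d_{[i]}/2, 1 − Σ_{j=1}^{i−1} d_{[j]} − (m−i+1)·d_{[i]}), where d_{[1]} ≤ ⋯ ≤ d_{[m]} are the gaps written in increasing order. -/

import Mathlib

/-!
A point `x` has no point of `S` within distance `t` exactly when it lies in
`U = {x | ∀ s ∈ S, t < |x - s|}`. This set is invariant under integer translations, so its part in
`[0, 1)` may be replaced by its part in the period `[p₁, p₁ + 1)`. No point of `S` lies strictly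
between `p_i` and `p_i + d_i` (`periodicSet_le_or_ge`), and the intervals `[p_i, p_i + d_i)` cover
that period (`exists_gap_interval`), so there `U` is the disjoint union of the open intervals
`(p_i + t, p_i + d_i - t)`, of length `max (d_i - 2t) 0`.
-/

open MeasureTheory

/-- The periodic point set `S = {p_i + j : 1 ≤ i ≤ m, j ∈ ℤ} ⊂ ℝ`
with period 1 and motif `p₁, …, p_m`. -/
def periodicSet {m : ℕ} (p : Fin m → ℝ) : Set ℝ :=
  {x | ∃ (i : Fin m) (j : ℤ), x = p i + j}

/-- The `k`-th density function `ψ_k(t)`: the Lebesgue measure of the set of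
`x ∈ [0,1)` such that exactly `k` points `s ∈ S` satisfy `|x − s| ≤ t`. -/
noncomputable def densityFn {m : ℕ} (p : Fin m → ℝ) (k : ℕ) (t : ℝ) : ℝ :=
  (volume {x ∈ Set.Ico (0 : ℝ) 1 |
    ({s ∈ periodicSet p | |x - s| ≤ t}).ncard = k}).toReal

/-- The gaps `d_i = p_{i+1} − p_i` (with `p_{m+1} = p₁ + 1`), indices modulo `m`. -/
noncomputable def gap {m : ℕ} [NeZero m] (p : Fin m → ℝ) (i : Fin m) : ℝ :=
  p (i + 1) - p i + (if (i : ℕ) + 1 = m then 1 else 0)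

lemma add_gap_cases {m : ℕ} [NeZero m] (p : Fin m → ℝ) (i : Fin m) :
    ((i : ℕ) + 1 = m ∧ p i + gap p i = p 0 + 1) ∨
    ∃ k : Fin m, (k : ℕ) = i + 1 ∧ p i + gap p i = p k := by
  by_cases h : (i : ℕ) + 1 = m
  · left
    have : i + 1 = 0 := by
      apply Fin.ext
      simp [Fin.val_add, h]
    refine ⟨h, ?_⟩
    rw [gap, this, if_pos h]
    ring
  · right
    have hlt : (i : ℕ) + 1 < m := by omega
    refine ⟨i + 1, ?_, ?_⟩
    · simp [Fin.val_add, Nat.mod_eq_of_lt hlt]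
    · rw [gap, if_neg h]
      ring

lemma add_gap_mem {m : ℕ} [NeZero m] (p : Fin m → ℝ) (i : Fin m) :
    p i + gap p i ∈ periodicSet p := by
  rcases add_gap_cases p i with ⟨-, h⟩ | ⟨k, -, h⟩
  · exact ⟨0, 1, by simp [h]⟩
  · exact ⟨k, 0, by simp [h]⟩

lemma add_gap_le {m : ℕ} [NeZero m] {p : Fin m → ℝ} (hmono : StrictMono p) {i j : Fin m}
    (hij : i < j) : p i + gap p i ≤ p j := by
  rcases add_gap_cases p i with ⟨h, -⟩ | ⟨k, hk, h⟩
  · have := j.isLt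
    have : (i : ℕ) < j := hij
    omega
  · rw [h]
    apply hmono.monotone
    have : (i : ℕ) < j := hij
    exact Fin.le_def.2 (by omega)

lemma add_gap_le_period {m : ℕ} [NeZero m] {p : Fin m → ℝ}
    (hp0 : ∀ i, 0 ≤ p i) (hp1 : ∀ i, p i < 1) (i : Fin m) : p i + gap p i ≤ p 0 + 1 := by
  rcases add_gap_cases p i with ⟨-, h⟩ | ⟨k, -, h⟩
  · exact h.le
  · rw [h]
    linarith [hp0 0, hp1 k]

/-- The interval between `p i` and `p i + gap p i` has no point of `S` in its interior. -/
lemma periodicSet_le_or_ge {m : ℕ} [NeZero m] {p : Fin m → ℝ}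
    (hp0 : ∀ i, 0 ≤ p i) (hp1 : ∀ i, p i < 1) (hmono : StrictMono p) (i : Fin m)
    {s : ℝ} (hs : s ∈ periodicSet p) : s ≤ p i ∨ p i + gap p i ≤ s := by
  obtain ⟨j, n, rfl⟩ := hs
  rcases lt_trichotomy n 0 with hn | rfl | hn
  · left
    have : (n : ℝ) ≤ -1 := by exact_mod_cast (by omega : n ≤ -1)
    linarith [hp0 i, hp1 j]
  · rcases le_or_gt j i with h | h
    · left
      simpa using hmono.monotone h
    · right
      simpa using add_gap_le hmono h
  · right
    have : (1 : ℝ) ≤ n := by exact_mod_cast (by omega : 1 ≤ n)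
    have := hmono.monotone (Fin.zero_le j)
    linarith [add_gap_le_period hp0 hp1 i]

/-- Every point of the period `[p 0, p 0 + 1)` lies in some `[p i, p i + gap p i)`: take the
largest `i` with `p i ≤ x`. -/
lemma exists_gap_interval {m : ℕ} [NeZero m] (p : Fin m → ℝ) {x : ℝ}
    (hx0 : p 0 ≤ x) (hx1 : x < p 0 + 1) : ∃ i, p i ≤ x ∧ x < p i + gap p i := by
  classical
  obtain ⟨i, hi, hmax⟩ := (Finset.univ.filter fun i => p i ≤ x).exists_max_image id
    ⟨0, by simpa using hx0⟩
  simp only [Finset.mem_filter, Finset.mem_univ, true_and, id] at hi hmax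
  refine ⟨i, hi, ?_⟩
  rcases add_gap_cases p i with ⟨-, h⟩ | ⟨k, hk, h⟩
  · rwa [h]
  · rw [h]
    by_contra! hle
    have := Fin.le_def.1 (hmax k hle)
    omega

/-- The points of `ℝ` at distance more than `t` from every point of `S`. -/
def farSet {m : ℕ} (p : Fin m → ℝ) (t : ℝ) : Set ℝ :=
  {x | ∀ s ∈ periodicSet p, t < |x - s|}

lemma farSet_inter_period {m : ℕ} [NeZero m] {p : Fin m → ℝ}
    (hp0 : ∀ i, 0 ≤ p i) (hp1 : ∀ i, p i < 1) (hmono : StrictMono p) {t : ℝ} (ht : 0 ≤ t) :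
    farSet p t ∩ Set.Ico (p 0) (p 0 + 1) =
      ⋃ i, Set.Ioo (p i + t) (p i + gap p i - t) := by
  ext x
  simp only [Set.mem_inter_iff, Set.mem_Ico, Set.mem_iUnion, Set.mem_Ioo]
  constructor
  · rintro ⟨hU, hx0, hx1⟩
    obtain ⟨i, hi, hi'⟩ := exists_gap_interval p hx0 hx1
    refine ⟨i, ?_, ?_⟩
    · have := hU (p i) ⟨i, 0, by simp⟩
      rw [abs_of_nonneg (by linarith)] at this
      linarith
    · have := hU _ (add_gap_mem p i)
      rw [abs_of_neg (by linarith)] at this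
      linarith
  · rintro ⟨i, h1, h2⟩
    refine ⟨fun s hs => ?_, ?_, ?_⟩
    · rw [lt_abs]
      rcases periodicSet_le_or_ge hp0 hp1 hmono i hs with h | h
      · left
        linarith
      · right
        linarith
    · linarith [hmono.monotone (Fin.zero_le i)]
    · linarith [add_gap_le_period hp0 hp1 i]

/-- Only finitely many points of `S` lie within `t` of `x`. Hence `ncard = 0` means that there
are none. -/
lemma finite_near {m : ℕ} (p : Fin m → ℝ) (x t : ℝ) :
    {s ∈ periodicSet p | |x - s| ≤ t}.Finite := by
  refine (Set.finite_iUnion fun i : Fin m =>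
    (Set.finite_Icc ⌈x - t - p i⌉ ⌊x + t - p i⌋).image fun j : ℤ => p i + (j : ℝ)).subset ?_
  rintro s ⟨⟨i, j, rfl⟩, hs⟩
  rw [abs_le] at hs
  refine Set.mem_iUnion.2 ⟨i, j, ⟨Int.ceil_le.2 ?_, Int.le_floor.2 ?_⟩, rfl⟩ <;> linarith

lemma densityFn_zero_eq {m : ℕ} (p : Fin m → ℝ) (t : ℝ) :
    densityFn p 0 t = (volume (farSet p t ∩ Set.Ico 0 1)).toReal := by
  rw [densityFn]
  congr 2
  ext x
  simp only [Set.mem_ofPred_eq, Set.mem_inter_iff, Set.ncard_eq_zero (finite_near p x t),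
    Set.eq_empty_iff_forall_notMem, farSet, not_and, not_le]
  exact and_comm

lemma add_int_mem_farSet {m : ℕ} (p : Fin m → ℝ) (t : ℝ) (n : ℤ) {x : ℝ}
    (hx : x ∈ farSet p t) : (n : ℝ) + x ∈ farSet p t := by
  rintro s ⟨i, j, rfl⟩
  have := hx (p i + ((j - n : ℤ) : ℝ)) ⟨i, _, rfl⟩
  push_cast at this
  convert this using 2
  ring

lemma measurableSet_farSet {m : ℕ} (p : Fin m → ℝ) (t : ℝ) : MeasurableSet (farSet p t) := by
  have : farSet p t = ⋂ i : Fin m, ⋂ j : ℤ, {x | t < |x - (p i + j)|} := by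
    ext x
    simp only [farSet, periodicSet, Set.mem_ofPred_eq, Set.mem_iInter]
    exact ⟨fun h i j => h _ ⟨i, j, rfl⟩, by rintro h _ ⟨i, j, rfl⟩; exact h i j⟩
  rw [this]
  exact .iInter fun i => .iInter fun j =>
    (isOpen_lt continuous_const (by fun_prop)).measurableSet

/-- Integer translation invariance of `farSet` lets any half-open unit interval serve as the
period. -/
lemma volume_farSet_period {m : ℕ} (p : Fin m → ℝ) (t a b : ℝ) :
    volume (farSet p t ∩ Set.Ico a (a + 1)) = volume (farSet p t ∩ Set.Ico b (b + 1)) := by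
  have key : ∀ c : ℝ, volume (farSet p t ∩ Set.Ico c (c + 1)) =
      volume (farSet p t ∩ Set.Ioc c (c + 1)) := fun c =>
    measure_congr ((Filter.EventuallyEq.refl _ _).inter Ico_ae_eq_Ioc)
  rw [key, key]
  refine (isAddFundamentalDomain_Ioc one_pos a volume).measure_set_eq
    (isAddFundamentalDomain_Ioc one_pos b volume) (measurableSet_farSet p t) ?_
  rintro ⟨g, hg⟩
  obtain ⟨n, rfl⟩ := AddSubgroup.mem_zmultiples_iff.1 hg
  ext x
  simp only [Set.mem_preimage, AddSubgroup.mk_vadd, vadd_eq_add, zsmul_eq_mul, mul_one]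
  refine ⟨fun h => ?_, add_int_mem_farSet p t n⟩
  simpa using add_int_mem_farSet p t (-n) h

/-- `ψ₀(t) = Σ_{i=1}^m max(d_i − 2t, 0)` for all `t ≥ 0`. -/
theorem stmt_12 {m : ℕ} [NeZero m] (p : Fin m → ℝ)
    (hp0 : ∀ i, 0 ≤ p i) (hp1 : ∀ i, p i < 1) (hmono : StrictMono p)
    (t : ℝ) (ht : 0 ≤ t) :
    densityFn p 0 t = ∑ i : Fin m, max (gap p i - 2 * t) 0 := by
  have h01 := volume_farSet_period p t 0 (p 0)
  rw [zero_add] at h01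
  rw [densityFn_zero_eq, h01, farSet_inter_period hp0 hp1 hmono ht, measure_iUnion]
  · rw [tsum_fintype, ENNReal.toReal_sum (fun i _ => by simp)]
    refine Finset.sum_congr rfl fun i _ => ?_
    rw [Real.volume_Ioo, ENNReal.toReal_ofReal']
    congr 1
    ring
  · have hlt : ∀ i j : Fin m, i < j → Disjoint (Set.Ioo (p i + t) (p i + gap p i - t))
        (Set.Ioo (p j + t) (p j + gap p j - t)) := by
      intro i j hij
      rw [Set.disjoint_left]
      rintro x ⟨-, hx⟩ ⟨hx', -⟩
      linarith [add_gap_le hmono hij]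
    intro i j hij
    rcases lt_or_gt_of_ne hij with h | h
    · exact hlt i j h
    · exact (hlt j i h).symm
  · exact fun i => measurableSet_Ioo
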